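/- For every T > 0 and every nonzero k ∈ ℤ², |1 − Ĥ_T(k)| ≥ (‖k‖²·T/4) · (1 − exp(−1/(‖k‖²·T))), where ‖k‖ denotes the Euclidean norm of k. -/

import Mathlib

open MeasureTheory Real

/-- The zeroth-order Bessel function `J⁰(k) = (1/π) ∫₀^π cos(k cos θ) dθ`. -/
noncomputable def J0 (k : ℝ) : ℝ :=
  (1 / Real.pi) * ∫ θ in (0:ℝ)..Real.pi, Real.cos (k * Real.cos θ)

/-- The Euclidean norm of `k ∈ ℤ²`. -/
noncomputable def eNorm (k : ℤ × ℤ) : ℝ :=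
  Real.sqrt ((k.1 : ℝ) ^ 2 + (k.2 : ℝ) ^ 2)

/-- The Fourier multiplier `Ĥ_T(k) = (2/T) ∫₀^∞ (J⁰(‖k‖u))² e^{-u²/T} u du`. -/
noncomputable def Hhat (T : ℝ) (k : ℤ × ℤ) : ℝ :=
  (2 / T) * ∫ u in Set.Ioi (0:ℝ), (J0 (eNorm k * u)) ^ 2 * Real.exp (-u ^ 2 / T) * u

/-!
It suffices to show `J0 x ^ 2 ≤ 1 - min (x ^ 2) 1 / 4` and to integrate this against the weight
`(2 / T) u exp (-u ^ 2 / T)`, which has total mass one.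

Cauchy–Schwarz and the half-angle formula give `J0 x ^ 2 ≤ (1 + J0 (2 * x)) / 2` and
`J1 x ^ 2 ≤ (1 - J0 (2 * x)) / 4`, while the Taylor bound for the cosine gives
`J0 x ≤ (1 - x ^ 2 / 8) ^ 2`. The first and the last estimate settle `x ^ 2 ≤ 2`. By Bessel's
equation `J1' = J0 - J1 / x`, the energy `J0 ^ 2 + J1 ^ 2` has derivative `-2 J1 ^ 2 / x ≤ 0` on
`(0, ∞)`. So for `x ≥ √2` it is at most its value at `√2`, which is at most
`3 / 4 + J0 (2 * √2) / 4 ≤ 3 / 4`.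
-/

open Set Filter Topology

theorem cos_le_one_sub_sq_add_pow_four (x : ℝ) :
    cos x ≤ 1 - x ^ 2 / 2 + x ^ 4 / 24 := by
  wlog hx : 0 ≤ x generalizing x
  · simpa [Even.neg_pow (by decide : Even 4)] using this (-x) (by linarith)
  rcases le_total (x ^ 2) 12 with h | h
  · have hsin : x / 2 - (x / 2) ^ 3 / 6 ≤ sin (x / 2) := sin_ge_sub_cube (by positivity)
    have hnonneg : 0 ≤ x / 2 - (x / 2) ^ 3 / 6 := by nlinarith
    calc cos x = 1 - 2 * sin (x / 2) ^ 2 := by rw [← cos_two_mul_eq_one_sub]; ring_nf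
      _ ≤ 1 - 2 * (x / 2 - (x / 2) ^ 3 / 6) ^ 2 := by gcongr
      _ ≤ 1 - x ^ 2 / 2 + x ^ 4 / 24 := by nlinarith [sq_nonneg (x ^ 3)]
  · nlinarith [cos_le_one x]

theorem hasDerivAt_intervalIntegral_of_continuous {E : Type*} [NormedAddCommGroup E]
    [NormedSpace ℝ E] {F F' : ℝ → ℝ → E} {a b : ℝ} (hF : ∀ x, Continuous (F x))
    (hF' : Continuous F'.uncurry) (hderiv : ∀ x t, HasDerivAt (F · t) (F' x t) x) (x : ℝ) :
    HasDerivAt (fun x => ∫ t in a..b, F x t) (∫ t in a..b, F' x t) x := by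
  obtain ⟨C, hC⟩ := ((isCompact_closedBall x 1).prod (isCompact_uIcc (a := a) (b := b)))
    |>.exists_bound_of_continuousOn hF'.continuousOn
  refine (intervalIntegral.hasDerivAt_integral_of_dominated_loc_of_deriv_le (bound := fun _ => C)
    (Metric.closedBall_mem_nhds x one_pos) (.of_forall fun y => (hF y).aestronglyMeasurable)
    ((hF x).intervalIntegrable a b)
    (hF'.comp (by fun_prop : Continuous (x, ·))).aestronglyMeasurable
    (.of_forall fun t ht y hy => hC (y, t) ⟨hy, uIoc_subset_uIcc ht⟩)
    intervalIntegrable_const (.of_forall fun t _ y _ => hderiv y t)).2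

theorem sq_integral_mul_le {α : Type*} [MeasurableSpace α] {μ : Measure α} {f g : α → ℝ}
    (hf : MemLp f 2 μ) (hg : MemLp g 2 μ) :
    (∫ a, f a * g a ∂μ) ^ 2 ≤ (∫ a, f a ^ 2 ∂μ) * ∫ a, g a ^ 2 ∂μ := by
  have hfg : Integrable (fun a => f a * g a) μ := hf.integrable_mul hg
  have hquad (s : ℝ) : 0 ≤ (∫ a, f a ^ 2 ∂μ) * (s * s) + (2 * ∫ a, f a * g a ∂μ) * s +
      ∫ a, g a ^ 2 ∂μ := by
    calc 0 ≤ ∫ a, (s * f a + g a) ^ 2 ∂μ := integral_nonneg fun _ => sq_nonneg _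
      _ = ∫ a, (s * s * f a ^ 2 + 2 * s * (f a * g a) + g a ^ 2) ∂μ := by
        congr with a; ring
      _ = _ := by
        rw [integral_add ((hf.integrable_sq.const_mul _).fun_add (hfg.const_mul _))
            hg.integrable_sq,
          integral_add (hf.integrable_sq.const_mul _) (hfg.const_mul _), integral_const_mul,
          integral_const_mul]
        ring
  have hdiscrim := discrim_le_zero hquad
  rw [discrim] at hdiscrim
  linarith

theorem sq_intervalIntegral_mul_le {f g : ℝ → ℝ} {a b : ℝ} (hab : a ≤ b)
    (hf : ContinuousOn f (Icc a b)) (hg : ContinuousOn g (Icc a b)) :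
    (∫ t in a..b, f t * g t) ^ 2 ≤ (∫ t in a..b, f t ^ 2) * ∫ t in a..b, g t ^ 2 := by
  have hmemLp {h : ℝ → ℝ} (hh : ContinuousOn h (Icc a b)) :
      MemLp h 2 (volume.restrict (Ioc a b)) :=
    (memLp_two_iff_integrable_sq
      ((hh.mono Ioc_subset_Icc_self).aestronglyMeasurable measurableSet_Ioc)).2
      ((hh.pow 2).integrableOn_Icc.mono_set Ioc_subset_Icc_self)
  simp only [intervalIntegral.integral_of_le hab]
  exact sq_integral_mul_le (hmemLp hf) (hmemLp hg)

section Bessel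

/-- The first-order Bessel function, in the form `J¹(k) = (1/π) ∫₀^π cos θ sin(k cos θ) dθ` obtained
by differentiating `-J⁰` under the integral. -/
noncomputable def J1 (k : ℝ) : ℝ :=
  (1 / π) * ∫ θ in (0:ℝ)..π, cos θ * sin (k * cos θ)

theorem J0_neg (x : ℝ) : J0 (-x) = J0 x := by
  simp only [J0, neg_mul, cos_neg]

theorem integral_cos_eq_pi_mul_J0 (x : ℝ) : ∫ θ in (0:ℝ)..π, cos (x * cos θ) = π * J0 x := by
  rw [J0, one_div, mul_inv_cancel_left₀ pi_ne_zero]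

theorem integral_cos_mul_sin_eq_pi_mul_J1 (x : ℝ) :
    ∫ θ in (0:ℝ)..π, cos θ * sin (x * cos θ) = π * J1 x := by
  rw [J1, one_div, mul_inv_cancel_left₀ pi_ne_zero]

theorem integral_sq_cos_eq_pi_mul (x : ℝ) :
    ∫ θ in (0:ℝ)..π, cos (x * cos θ) ^ 2 = π * ((1 + J0 (2 * x)) / 2) := by
  calc ∫ θ in (0:ℝ)..π, cos (x * cos θ) ^ 2
      = ∫ θ in (0:ℝ)..π, (1 / 2 + cos (2 * x * cos θ) / 2) := by
        simp only [cos_sq, mul_assoc]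
    _ = π * ((1 + J0 (2 * x)) / 2) := by
        rw [intervalIntegral.integral_add intervalIntegrable_const
          (Continuous.intervalIntegrable (by fun_prop) _ _), intervalIntegral.integral_const,
          intervalIntegral.integral_div, integral_cos_eq_pi_mul_J0, smul_eq_mul]
        ring

theorem integral_sq_sin_eq_pi_mul (x : ℝ) :
    ∫ θ in (0:ℝ)..π, sin (x * cos θ) ^ 2 = π * ((1 - J0 (2 * x)) / 2) := by
  simp only [sin_sq]
  rw [intervalIntegral.integral_sub intervalIntegrable_const
    (Continuous.intervalIntegrable (by fun_prop) _ _), intervalIntegral.integral_const,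
    integral_sq_cos_eq_pi_mul, smul_eq_mul]
  ring

theorem J0_sq_le (x : ℝ) : J0 x ^ 2 ≤ (1 + J0 (2 * x)) / 2 := by
  have h := sq_intervalIntegral_mul_le (f := fun θ => cos (x * cos θ)) (g := fun _ => 1) pi_pos.le
    (by fun_prop) continuousOn_const
  simp only [mul_one, one_pow, intervalIntegral.integral_const, smul_eq_mul, sub_zero,
    integral_cos_eq_pi_mul_J0, integral_sq_cos_eq_pi_mul] at h
  exact le_of_mul_le_mul_left (by linarith) (pow_pos pi_pos 2)

theorem J1_sq_le (x : ℝ) : J1 x ^ 2 ≤ (1 - J0 (2 * x)) / 4 := by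
  have h := sq_intervalIntegral_mul_le (g := fun θ => sin (x * cos θ)) pi_pos.le continuousOn_cos
    (by fun_prop)
  rw [integral_cos_mul_sin_eq_pi_mul_J1, integral_sq_sin_eq_pi_mul, integral_cos_sq, sin_pi,
    sin_zero] at h
  exact le_of_mul_le_mul_left (by linarith) (pow_pos pi_pos 2)

theorem J0_le_one_sub_sq_div_eight_sq (x : ℝ) : J0 x ≤ (1 - x ^ 2 / 8) ^ 2 := by
  have hmoments : ∫ θ in (0:ℝ)..π, (1 - x ^ 2 / 2 * cos θ ^ 2 + x ^ 4 / 24 * cos θ ^ 4) =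
      π * (1 - x ^ 2 / 8) ^ 2 := by
    rw [intervalIntegral.integral_add, intervalIntegral.integral_sub,
      intervalIntegral.integral_const_mul, intervalIntegral.integral_const_mul,
      intervalIntegral.integral_const, integral_cos_pow (n := 2), integral_cos_sq, sin_pi,
      sin_zero, smul_eq_mul]
    · ring
    all_goals exact Continuous.intervalIntegrable (by fun_prop) _ _
  refine le_of_mul_le_mul_left ?_ pi_pos
  rw [← integral_cos_eq_pi_mul_J0, ← hmoments]
  refine intervalIntegral.integral_mono pi_pos.le (Continuous.intervalIntegrable (by fun_prop) _ _)
    (Continuous.intervalIntegrable (by fun_prop) _ _) fun θ => ?_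
  exact (cos_le_one_sub_sq_add_pow_four _).trans_eq (by ring)

theorem hasDerivAt_J0 (x : ℝ) : HasDerivAt J0 (-J1 x) x := by
  have h := hasDerivAt_intervalIntegral_of_continuous (a := 0) (b := π)
    (F := fun x θ => cos (x * cos θ)) (F' := fun x θ => -(cos θ * sin (x * cos θ)))
    (by fun_prop) (by fun_prop)
    (fun x θ => (hasDerivAt_mul_const (cos θ)).cos.congr_deriv (by ring)) x
  exact (h.const_mul (1 / π)).congr_deriv (by rw [intervalIntegral.integral_neg, mul_neg, J1])

theorem hasDerivAt_J1 (x : ℝ) :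
    HasDerivAt J1 (J0 x - (1 / π) * ∫ θ in (0:ℝ)..π, sin θ ^ 2 * cos (x * cos θ)) x := by
  have h := hasDerivAt_intervalIntegral_of_continuous (a := 0) (b := π)
    (F := fun x θ => cos θ * sin (x * cos θ))
    (F' := fun x θ => cos (x * cos θ) - sin θ ^ 2 * cos (x * cos θ))
    (by fun_prop) (by fun_prop)
    (fun x θ => ((hasDerivAt_mul_const (cos θ)).sin.const_mul (cos θ)).congr_deriv
      (by rw [sin_sq]; ring)) x
  refine (h.const_mul (1 / π)).congr_deriv ?_
  rw [intervalIntegral.integral_sub (Continuous.intervalIntegrable (by fun_prop) _ _)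
    (Continuous.intervalIntegrable (by fun_prop) _ _), mul_sub, J0]

theorem J1_eq_mul_integral (x : ℝ) :
    J1 x = x * ((1 / π) * ∫ θ in (0:ℝ)..π, sin θ ^ 2 * cos (x * cos θ)) := by
  have hparts : ∫ θ in (0:ℝ)..π, (cos θ * sin (x * cos θ) - x * (sin θ ^ 2 * cos (x * cos θ))) =
      sin π * sin (x * cos π) - sin 0 * sin (x * cos 0) :=
    intervalIntegral.integral_eq_sub_of_hasDerivAt (f := fun θ => sin θ * sin (x * cos θ))
      (fun θ _ => ((hasDerivAt_sin θ).mul ((hasDerivAt_cos θ).const_mul x).sin).congr_deriv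
        (by ring))
      (Continuous.intervalIntegrable (by fun_prop) _ _)
  rw [intervalIntegral.integral_sub (Continuous.intervalIntegrable (by fun_prop) _ _)
    (Continuous.intervalIntegrable (by fun_prop) _ _), intervalIntegral.integral_const_mul,
    sin_pi, sin_zero, zero_mul, zero_mul, sub_zero, sub_eq_zero] at hparts
  rw [J1, hparts]
  ring

theorem antitoneOn_J0_sq_add_J1_sq : AntitoneOn (fun x => J0 x ^ 2 + J1 x ^ 2) (Ici 0) := by
  have hderiv (x : ℝ) : HasDerivAt (fun x => J0 x ^ 2 + J1 x ^ 2)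
      (-2 * x * ((1 / π) * ∫ θ in (0:ℝ)..π, sin θ ^ 2 * cos (x * cos θ)) ^ 2) x := by
    refine (((hasDerivAt_J0 x).pow 2).add ((hasDerivAt_J1 x).pow 2)).congr_deriv ?_
    rw [J1_eq_mul_integral x]
    ring
  refine antitoneOn_of_hasDerivWithinAt_nonpos (convex_Ici 0)
    (fun x _ => (hderiv x).continuousAt.continuousWithinAt)
    (fun x _ => (hderiv x).hasDerivWithinAt) fun x hx => ?_
  rw [interior_Ici, mem_Ioi] at hx
  exact mul_nonpos_of_nonpos_of_nonneg (by linarith) (sq_nonneg _)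

theorem J0_sq_le_three_quarters {x : ℝ} (hx : √2 ≤ x) : J0 x ^ 2 ≤ 3 / 4 := by
  have hJ0 : J0 (2 * √2) ≤ 0 :=
    (J0_le_one_sub_sq_div_eight_sq _).trans_eq (by rw [mul_pow, sq_sqrt] <;> norm_num)
  have hx0 : 0 ≤ x := (sqrt_nonneg 2).trans hx
  calc J0 x ^ 2 ≤ J0 x ^ 2 + J1 x ^ 2 := le_add_of_nonneg_right (sq_nonneg _)
    _ ≤ J0 √2 ^ 2 + J1 √2 ^ 2 := antitoneOn_J0_sq_add_J1_sq (sqrt_nonneg 2) hx0 hx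
    _ ≤ (1 + J0 (2 * √2)) / 2 + (1 - J0 (2 * √2)) / 4 := add_le_add (J0_sq_le _) (J1_sq_le _)
    _ ≤ 3 / 4 := by linarith

theorem J0_sq_le_one_sub_sq_div_four {x : ℝ} (hx : x ^ 2 ≤ 2) : J0 x ^ 2 ≤ 1 - x ^ 2 / 4 := by
  calc J0 x ^ 2 ≤ (1 + J0 (2 * x)) / 2 := J0_sq_le x
    _ ≤ (1 + (1 - (2 * x) ^ 2 / 8) ^ 2) / 2 := by gcongr; exact J0_le_one_sub_sq_div_eight_sq _
    _ = 1 - x ^ 2 / 4 - x ^ 2 * (2 - x ^ 2) / 8 := by ring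
    _ ≤ 1 - x ^ 2 / 4 := sub_le_self _ (by have := sub_nonneg.2 hx; positivity)

theorem J0_sq_le_one_sub_min (x : ℝ) : J0 x ^ 2 ≤ 1 - min (x ^ 2) 1 / 4 := by
  wlog hx : 0 ≤ x generalizing x
  · simpa only [J0_neg, neg_sq] using this (-x) (by linarith)
  rcases le_total (x ^ 2) 2 with hnear | hfar
  · linarith [J0_sq_le_one_sub_sq_div_four hnear, min_le_left (x ^ 2) 1]
  · linarith [J0_sq_le_three_quarters (sqrt_le_iff.2 ⟨hx, hfar⟩), min_le_right (x ^ 2) 1]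

end Bessel

section Gaussian

variable {T : ℝ}

theorem hasDerivAt_exp_neg_sq_div (T u : ℝ) :
    HasDerivAt (fun u => exp (-u ^ 2 / T)) (-(2 / T) * (exp (-u ^ 2 / T) * u)) u :=
  ((hasDerivAt_pow 2 u).fun_neg.div_const T).exp.congr_deriv (by ring)

theorem integrable_exp_neg_sq_div_mul (hT : 0 < T) :
    Integrable fun u : ℝ => exp (-u ^ 2 / T) * u := by
  refine (integrable_mul_exp_neg_mul_sq (inv_pos.2 hT)).congr (.of_forall fun u => ?_)
  simp only [mul_comm u]
  congr 2
  ring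

theorem integral_Ioi_exp_neg_sq_div_mul (hT : 0 < T) (b : ℝ) :
    ∫ u in Ioi b, exp (-u ^ 2 / T) * u = T / 2 * exp (-b ^ 2 / T) := by
  have hderiv (u : ℝ) : HasDerivAt (fun u => -(T / 2) * exp (-u ^ 2 / T))
      (exp (-u ^ 2 / T) * u) u :=
    ((hasDerivAt_exp_neg_sq_div T u).const_mul (-(T / 2))).congr_deriv (by field_simp)
  have hlim : Tendsto (fun u : ℝ => -(T / 2) * exp (-u ^ 2 / T)) atTop (𝓝 0) := by
    have h : Tendsto (fun u : ℝ => u ^ 2 / T) atTop atTop :=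
      (tendsto_pow_atTop two_ne_zero).atTop_div_const hT
    simpa [neg_div] using (tendsto_exp_neg_atTop_nhds_zero.comp h).const_mul (-(T / 2))
  rw [integral_Ioi_of_hasDerivAt_of_tendsto' (fun u _ => hderiv u)
    (integrable_exp_neg_sq_div_mul hT).integrableOn hlim]
  ring

theorem integral_sq_mul_exp_neg_sq_div_mul (hT : T ≠ 0) (a b : ℝ) :
    ∫ u in a..b, u ^ 2 * (exp (-u ^ 2 / T) * u) =
      T / 2 * ((a ^ 2 + T) * exp (-a ^ 2 / T) - (b ^ 2 + T) * exp (-b ^ 2 / T)) := by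
  have hderiv (u : ℝ) : HasDerivAt (fun u => -(T / 2) * ((u ^ 2 + T) * exp (-u ^ 2 / T)))
      (u ^ 2 * (exp (-u ^ 2 / T) * u)) u :=
    ((((hasDerivAt_pow 2 u).add_const T).mul (hasDerivAt_exp_neg_sq_div T u)).const_mul
      (-(T / 2))).congr_deriv (by field_simp; ring)
  rw [intervalIntegral.integral_eq_sub_of_hasDerivAt (fun u _ => hderiv u)
    (Continuous.intervalIntegrable (by fun_prop) _ _)]
  ring

theorem integrable_min_sq_mul_exp_neg_sq_div_mul (hT : 0 < T) (b : ℝ) :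
    Integrable fun u : ℝ => min (u ^ 2) (b ^ 2) * (exp (-u ^ 2 / T) * u) := by
  refine (integrable_exp_neg_sq_div_mul hT).bdd_mul (c := b ^ 2)
    (by fun_prop : Continuous fun u : ℝ => min (u ^ 2) (b ^ 2)).aestronglyMeasurable
    (.of_forall fun u => ?_)
  rw [norm_of_nonneg (le_min (sq_nonneg u) (sq_nonneg b))]
  exact min_le_right _ _

theorem integral_Ioi_min_sq_mul_exp_neg_sq_div_mul (hT : 0 < T) {b : ℝ} (hb : 0 ≤ b) :
    ∫ u in Ioi (0:ℝ), min (u ^ 2) (b ^ 2) * (exp (-u ^ 2 / T) * u) =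
      T ^ 2 / 2 * (1 - exp (-b ^ 2 / T)) := by
  have hint := integrable_min_sq_mul_exp_neg_sq_div_mul hT b
  have hnear : ∫ u in (0:ℝ)..b, min (u ^ 2) (b ^ 2) * (exp (-u ^ 2 / T) * u) =
      ∫ u in (0:ℝ)..b, u ^ 2 * (exp (-u ^ 2 / T) * u) := by
    refine intervalIntegral.integral_congr fun u hu => ?_
    rw [uIcc_of_le hb] at hu
    simp only [min_eq_left (pow_le_pow_left₀ hu.1 hu.2 2)]
  have hfar : ∫ u in Ioi b, min (u ^ 2) (b ^ 2) * (exp (-u ^ 2 / T) * u) =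
      ∫ u in Ioi b, b ^ 2 * (exp (-u ^ 2 / T) * u) :=
    setIntegral_congr_fun measurableSet_Ioi fun u hu => by
      simp only [min_eq_right (pow_le_pow_left₀ hb (mem_Ioi.1 hu).le 2)]
  rw [← intervalIntegral.integral_interval_add_Ioi hint.integrableOn hint.integrableOn, hnear, hfar,
    integral_sq_mul_exp_neg_sq_div_mul hT.ne', integral_const_mul,
    integral_Ioi_exp_neg_sq_div_mul hT, zero_pow two_ne_zero, neg_zero, zero_div, exp_zero]
  ring

theorem integral_Ioi_mul_exp_neg_sq_div_mul_le (hT : 0 < T) {f : ℝ → ℝ} {b c : ℝ} (hb : 0 ≤ b)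
    (hf : ∀ u > 0, 0 ≤ f u) (hf_le : ∀ u > 0, f u ≤ 1 - c * min (u ^ 2) (b ^ 2)) :
    ∫ u in Ioi (0:ℝ), f u * exp (-u ^ 2 / T) * u ≤
      T / 2 - c * (T ^ 2 / 2 * (1 - exp (-b ^ 2 / T))) := by
  have hweight := (integrable_exp_neg_sq_div_mul hT).integrableOn (s := Ioi 0)
  have htrunc := ((integrable_min_sq_mul_exp_neg_sq_div_mul hT b).const_mul c).integrableOn
    (s := Ioi 0)
  calc ∫ u in Ioi (0:ℝ), f u * exp (-u ^ 2 / T) * u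
      ≤ ∫ u in Ioi (0:ℝ), (exp (-u ^ 2 / T) * u -
          c * (min (u ^ 2) (b ^ 2) * (exp (-u ^ 2 / T) * u))) := by
        refine integral_mono_of_nonneg (ae_restrict_of_forall_mem measurableSet_Ioi fun u hu => ?_)
          (hweight.sub htrunc) (ae_restrict_of_forall_mem measurableSet_Ioi fun u hu => ?_)
        · exact mul_nonneg (mul_nonneg (hf u hu) (exp_nonneg _)) (mem_Ioi.1 hu).le
        · have hw : 0 ≤ exp (-u ^ 2 / T) * u := mul_nonneg (exp_nonneg _) (mem_Ioi.1 hu).le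
          linarith [mul_le_mul_of_nonneg_right (hf_le u hu) hw]
    _ = T / 2 - c * (T ^ 2 / 2 * (1 - exp (-b ^ 2 / T))) := by
        rw [integral_sub hweight htrunc, integral_Ioi_exp_neg_sq_div_mul hT, integral_const_mul,
          integral_Ioi_min_sq_mul_exp_neg_sq_div_mul hT hb]
        simp

end Gaussian

theorem Hhat_lower_bound_general {T r : ℝ} (hT : 0 < T) (hr : r ≠ 0) :
    (r ^ 2 * T / 4) * (1 - exp (-1 / (r ^ 2 * T))) ≤
      1 - (2 / T) * ∫ u in Ioi (0:ℝ), J0 (r * u) ^ 2 * exp (-u ^ 2 / T) * u := by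
  have hJ0 (u : ℝ) : J0 (r * u) ^ 2 ≤ 1 - r ^ 2 / 4 * min (u ^ 2) (|r|⁻¹ ^ 2) := by
    have hmin : r ^ 2 * min (u ^ 2) (|r|⁻¹ ^ 2) = min ((r * u) ^ 2) 1 := by
      rw [mul_min_of_nonneg _ _ (sq_nonneg r), inv_pow, sq_abs,
        mul_inv_cancel₀ (pow_ne_zero 2 hr), mul_pow]
    linarith [J0_sq_le_one_sub_min (r * u)]
  have hintegral := integral_Ioi_mul_exp_neg_sq_div_mul_le hT (inv_nonneg.2 (abs_nonneg r))
    (fun u _ => sq_nonneg (J0 (r * u))) fun u _ => hJ0 u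
  have hexponent : -|r|⁻¹ ^ 2 / T = -1 / (r ^ 2 * T) := by
    rw [inv_pow, sq_abs]
    field_simp
  rw [hexponent] at hintegral
  calc (r ^ 2 * T / 4) * (1 - exp (-1 / (r ^ 2 * T)))
      = 1 - 2 / T * (T / 2 - r ^ 2 / 4 * (T ^ 2 / 2 * (1 - exp (-1 / (r ^ 2 * T))))) := by
        field_simp
        ring
    _ ≤ _ := by gcongr

theorem eNorm_ne_zero {k : ℤ × ℤ} (hk : k ≠ 0) : eNorm k ≠ 0 := by
  contrapose! hk
  rw [eNorm, sqrt_eq_zero (by positivity)] at hk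
  have h := (add_eq_zero_iff_of_nonneg (sq_nonneg _) (sq_nonneg _)).1 hk
  simpa [Prod.ext_iff] using h

theorem Hhat_lower_bound (T : ℝ) (hT : 0 < T) (k : ℤ × ℤ) (hk : k ≠ 0) :
    (eNorm k ^ 2 * T / 4) * (1 - Real.exp (-1 / (eNorm k ^ 2 * T))) ≤ |1 - Hhat T k| :=
  (Hhat_lower_bound_general hT (eNorm_ne_zero hk)).trans (le_abs_self _)
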